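/- Let (Y_1,…,Y_{n+1}) be an irreducible Σ_q-family on a complex Hilbert space H with Y_{n+1}≠0. Then there exist λ∈ℂ with |λ|=1 and a unitary operator U: H → ℓ²(ℕⁿ) such that U Y_i U* = π_λ(Y_i) for all 1≤i≤n+1; that is, every irreducible bounded *-representation of the algebra A(Σ_q^{2n+1}) that does not annihilate the last generator is unitarily equivalent to some π_λ. -/

import Mathlib

open ContinuousLinearMap

noncomputable section

abbrev lpH (n : ℕ) : Type := lp (fun _ : Fin n → ℕ => ℂ) 2

def basisE {n : ℕ} (k : Fin n → ℕ) : lpH n := lp.single 2 k 1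

/-- A `Σ_q`-family: relations (R1)-(R5). Index `i : Fin (n+1)` corresponds to `Y_{i+1}`. -/
def IsSigmaQFamily (q : ℝ) {n : ℕ} {H : Type*} [NormedAddCommGroup H]
    [InnerProductSpace ℂ H] [CompleteSpace H]
    (Y : Fin (n + 1) → H →L[ℂ] H) : Prop :=
  (∀ i j : Fin (n + 1), j < i → ¬((i : ℕ) = n ∧ (j : ℕ) + 1 = n) →
      Y i * Y j = ((q : ℂ))⁻¹ • (Y j * Y i) ∧
      adjoint (Y i) * Y j = ((q : ℂ))⁻¹ • (Y j * adjoint (Y i))) ∧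
  (∀ j : Fin (n + 1), (j : ℕ) + 1 = n →
      Y (Fin.last n) * Y j = (((q : ℂ))⁻¹ ^ 2) • (Y j * Y (Fin.last n)) ∧
      adjoint (Y (Fin.last n)) * Y j = (((q : ℂ))⁻¹ ^ 2) • (Y j * adjoint (Y (Fin.last n)))) ∧
  (∀ i : Fin (n + 1), (i : ℕ) + 1 ≠ n →
      Y i * adjoint (Y i) - adjoint (Y i) * Y i
        = ((1 - q ^ 2 : ℝ) : ℂ) • ∑ k ∈ Finset.Ioi i, adjoint (Y k) * Y k) ∧
  (∀ i : Fin (n + 1), (i : ℕ) + 1 = n →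
      Y i * adjoint (Y i) - adjoint (Y i) * Y i
        = ((1 - q ^ 4 : ℝ) : ℂ) • (adjoint (Y (Fin.last n)) * Y (Fin.last n))) ∧
  (∑ i, adjoint (Y i) * Y i = 1)

/-- The representation `π_λ` on `ℓ²(ℕⁿ)`, described by its action on the canonical
orthonormal basis. Index `i : Fin n` (via `castSucc`) corresponds to `Y_{i+1}`,
and `Fin.last n` corresponds to `Y_{n+1}`. -/
def IsPiRep (q : ℝ) {n : ℕ} (lam : ℂ) (Y : Fin (n + 1) → lpH n →L[ℂ] lpH n) : Prop :=
  (∀ i : Fin n, (i : ℕ) + 1 < n → ∀ k : Fin n → ℕ,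
      Y i.castSucc (basisE k)
        = ((q ^ (∑ j ∈ Finset.Iio i, k j) * Real.sqrt (1 - q ^ (2 * k i)) : ℝ) : ℂ)
            • basisE (Function.update k i (k i - 1))) ∧
  (∀ i : Fin n, (i : ℕ) + 1 = n → ∀ k : Fin n → ℕ,
      Y i.castSucc (basisE k)
        = ((q ^ (∑ j ∈ Finset.Iio i, k j) * Real.sqrt (1 - q ^ (4 * k i)) : ℝ) : ℂ)
            • basisE (Function.update k i (k i - 1))) ∧
  (∀ k : Fin n → ℕ,
      Y (Fin.last n) (basisE k)
        = (lam * (q : ℂ) ^ (∑ j : Fin n, if (j : ℕ) + 1 = n then 2 * k j else k j))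
            • basisE k)

/-- Irreducibility: the only closed invariant subspaces are `⊥` and `⊤`. -/
def IsIrreducibleFamily {n : ℕ} {H : Type*} [NormedAddCommGroup H]
    [InnerProductSpace ℂ H] [CompleteSpace H]
    (Y : Fin (n + 1) → H →L[ℂ] H) : Prop :=
  ∀ V : Submodule ℂ H, IsClosed (V : Set H) →
    (∀ i : Fin (n + 1), ∀ v ∈ V, Y i v ∈ V ∧ adjoint (Y i) v ∈ V) →
    V = ⊥ ∨ V = ⊤

/-!
Write `Z = Y_{n+1}`. If a self-adjoint `T` commutes with every `Y_i` up to a positive scalar, then so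
does its positive part, and kernels of such operators are invariant; by irreducibility `T` is
semidefinite, and injective or zero. Applied to the imaginary part of a rotation of `Z`, this gives
`Z = λ P` with `|λ| = 1` and `P ≥ 0`.

Since `Y_j P = a_j P Y_j` with `a_j < 1`, the operators `Y_1, …, Y_n` kill the spectral subspace of
`P` near `‖P‖`, which yields a vacuum vector `v`. The vectors `Y_1*^{k_1} ⋯ Y_n*^{k_n} v` are joint
eigenvectors of the tail sums `Y_i* Y_i + ⋯ + Y_{n+1}* Y_{n+1}`, and the eigenvalues separate the
multi-indices `k`, so these vectors are orthogonal. Their closed span is invariant, so normalizing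
them gives a Hilbert basis on which the `Y_i` act as in `π_λ`.
-/

section QCommute

variable {A : Type*} [Ring A] [Algebra ℝ A] {c d : ℝ} {S T x y : A}

/-- `T` and `x` commute up to the scalar `c`, which stands on the side of the product `x * T`. -/
def QCommute (c : ℝ) (T x : A) : Prop := T * x = c • (x * T)

namespace QCommute

lemma semiconjBy_right (h : QCommute c T x) : SemiconjBy x (c • T) T := by
  rw [SemiconjBy, mul_smul_comm]; exact h.symm

lemma semiconjBy_left (h : QCommute c T x) : SemiconjBy T x (c • x) := by
  rw [SemiconjBy, smul_mul_assoc]; exact h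

lemma of_commute (h : Commute T x) : QCommute 1 T x :=
  h.eq.trans (one_smul ℝ _).symm

lemma commute (h : QCommute 1 T x) : Commute T x :=
  Eq.trans h (one_smul ℝ _)

lemma symm (h : QCommute c T x) (hc : c ≠ 0) : QCommute c⁻¹ x T :=
  ((inv_smul_eq_iff₀ hc).mpr h).symm

lemma mul_right (hx : QCommute c T x) (hy : QCommute d T y) : QCommute (c * d) T (x * y) := by
  rw [QCommute, ← mul_assoc, hx, smul_mul_assoc, mul_assoc, hy, mul_smul_comm, smul_smul, mul_assoc]

lemma sum_right {ι : Type*} {s : Finset ι} {x : ι → A} (h : ∀ k ∈ s, QCommute c T (x k)) :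
    QCommute c T (∑ k ∈ s, x k) := by
  rw [QCommute, Finset.mul_sum, Finset.sum_mul, Finset.smul_sum]
  exact Finset.sum_congr rfl h

lemma sub_left (hS : QCommute c S x) (hT : QCommute c T x) : QCommute c (S - T) x := by
  rw [QCommute, sub_mul, mul_sub, smul_sub, hS, hT]

lemma pow_right (h : QCommute c T x) (m : ℕ) : QCommute (c ^ m) T (x ^ m) := by
  induction m with
  | zero => simpa using! of_commute (Commute.one_right T)
  | succ m ih => simpa only [pow_succ] using ih.mul_right h

lemma smul_left {R : Type*} [CommSemiring R] [Algebra R A] (h : QCommute c T x) (r : R) :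
    QCommute c (r • T) x := by
  rw [QCommute, smul_mul_assoc, mul_smul_comm, h, smul_comm]

lemma star_star [StarRing A] [StarModule ℝ A] (h : QCommute c T x) :
    QCommute c (star x) (star T) := by
  simpa only [QCommute, star_mul, star_smul, star_trivial] using congrArg star h

end QCommute

end QCommute

section FunctionalCalculus

lemma semiconjBy_cfc {A : Type*} [Ring A] [StarRing A] [Algebra ℝ A] [TopologicalSpace A]
    [ContinuousFunctionalCalculus ℝ A IsSelfAdjoint] [IsTopologicalRing A] [T2Space A]
    {a b x : A} (h : SemiconjBy x a b) (ha : IsSelfAdjoint a) (hb : IsSelfAdjoint b)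
    {f : ℝ → ℝ} (hf : ContinuousOn f (spectrum ℝ a ∪ spectrum ℝ b)) :
    SemiconjBy x (cfc f a) (cfc f b) := by
  set s := spectrum ℝ a ∪ spectrum ℝ b
  have hsa : spectrum ℝ a ⊆ s := Set.subset_union_left
  have hsb : spectrum ℝ b ⊆ s := Set.subset_union_right
  have : CompactSpace s := isCompact_iff_compactSpace.mp <|
    (ContinuousFunctionalCalculus.isCompact_spectrum a).union
      (ContinuousFunctionalCalculus.isCompact_spectrum b)
  suffices hHom : ∀ g : C(s, ℝ),
      SemiconjBy x (cfcHomSuperset ha hsa g) (cfcHomSuperset hb hsb g) by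
    rw [cfc_apply f a ha (hf.mono hsa), cfc_apply f b hb (hf.mono hsb)]
    exact hHom ⟨_, hf.domRestrict⟩
  have hid : SemiconjBy x (cfcHomSuperset ha hsa (.restrict s (.id ℝ)))
      (cfcHomSuperset hb hsb (.restrict s (.id ℝ))) := by
    rwa [cfcHomSuperset_id, cfcHomSuperset_id]
  intro g
  induction g using ContinuousMap.induction_on_of_compact with
  | const r =>
    change SemiconjBy x (cfcHomSuperset ha hsa (algebraMap ℝ _ r))
      (cfcHomSuperset hb hsb (algebraMap ℝ _ r))
    rw [AlgHomClass.commutes, AlgHomClass.commutes]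
    exact Algebra.commute_algebraMap_right r x
  | id => exact hid
  | star_id => rwa [star_trivial]
  | add f g hf hg => rw [map_add, map_add]; exact hf.add_right hg
  | mul f g hf hg => rw [map_mul, map_mul]; exact hf.mul_right hg
  | frequently g hg =>
    have hclosed : IsClosed {g : C(s, ℝ) |
        x * cfcHomSuperset ha hsa g = cfcHomSuperset hb hsb g * x} :=
      isClosed_eq (continuous_const.mul (cfcHomSuperset_continuous ha hsa))
        ((cfcHomSuperset_continuous hb hsb).mul continuous_const)
    exact hclosed.mem_of_frequently_of_tendsto hg Filter.tendsto_id

variable {A : Type*} [CStarAlgebra A] {a b x T : A} {c r : ℝ}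

lemma semiconjBy_posPart (h : SemiconjBy x a b) (ha : IsSelfAdjoint a) (hb : IsSelfAdjoint b) :
    SemiconjBy x a⁺ b⁺ := by
  rw [CFC.posPart_def, CFC.posPart_def, cfcₙ_eq_cfc, cfcₙ_eq_cfc]
  exact semiconjBy_cfc h ha hb (by fun_prop)

lemma QCommute.posPart (h : QCommute c T x) (hT : IsSelfAdjoint T) (hc : 0 ≤ c) :
    QCommute c T⁺ x := by
  have := semiconjBy_posPart h.semiconjBy_right ((IsSelfAdjoint.all c).smul hT) hT
  rw [CFC.posPart_smul_of_nonneg hc, SemiconjBy, mul_smul_comm] at this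
  exact this.symm

variable [PartialOrder A] [StarOrderedRing A]

lemma posPart_smul_sub_norm_eq_zero (hT : 0 ≤ T) (hr : 0 ≤ r) (hcr : c ≤ r) :
    (c • T - algebraMap ℝ A (r * ‖T‖))⁺ = 0 := by
  have hT' : IsSelfAdjoint T := .of_nonneg hT
  rw [CFC.posPart_eq_zero_iff _ (((IsSelfAdjoint.all c).smul hT').sub (.algebraMap _ (.all _))),
    sub_nonpos]
  calc c • T ≤ r • T := smul_le_smul_of_nonneg_right hcr hT
    _ ≤ r • algebraMap ℝ A ‖T‖ := smul_le_smul_of_nonneg_left hT'.le_algebraMap_norm_self hr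
    _ = algebraMap ℝ A (r * ‖T‖) := by rw [map_mul, Algebra.smul_def]

lemma posPart_sub_norm_ne_zero (hT : 0 ≤ T) (hT0 : T ≠ 0) (hr0 : 0 ≤ r) (hr : r < 1) :
    (T - algebraMap ℝ A (r * ‖T‖))⁺ ≠ 0 := by
  have : Nontrivial A := ⟨T, 0, hT0⟩
  have hT' : IsSelfAdjoint T := .of_nonneg hT
  rw [Ne, CFC.posPart_eq_zero_iff _ (hT'.sub (.algebraMap _ (.all _))), sub_nonpos]
  intro hle
  have hnorm : ‖T‖ ≤ r * ‖T‖ :=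
    calc ‖T‖ ≤ ‖algebraMap ℝ A (r * ‖T‖)‖ := CStarAlgebra.norm_le_norm_of_nonneg_of_le hT hle
      _ = r * ‖T‖ := by rw [norm_algebraMap', Real.norm_of_nonneg (by positivity)]
  nlinarith [norm_pos_iff.mpr hT0]

end FunctionalCalculus

section Irreducible

variable {H : Type*} [NormedAddCommGroup H] [InnerProductSpace ℂ H] [CompleteSpace H]

-- Each `X j` maps the spectral subspace of `T` for `(r‖T‖, ∞)` into that of `c j • T`, which is `0`
-- as soon as `c j ≤ r`. A common `r < 1` leaves a nonzero subspace of `T`.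
lemma exists_ne_zero_forall_apply_eq_zero {ι : Type*} [Finite ι] {T : H →L[ℂ] H}
    {X : ι → H →L[ℂ] H} {c : ι → ℝ} (hT : 0 ≤ T) (hT0 : T ≠ 0) (hc : ∀ j, c j < 1)
    (h : ∀ j, QCommute (c j) (X j) T) : ∃ v ≠ 0, ∀ j, X j v = 0 := by
  obtain ⟨r, hcr, hr0, hr1⟩ : ∃ r, (∀ j, c j ≤ r) ∧ 0 ≤ r ∧ r < 1 :=
    ((Filter.eventually_all.mpr fun j => (eventually_ge_nhds (hc j)).filter_mono
      nhdsWithin_le_nhds).and <| ((eventually_ge_nhds one_pos).filter_mono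
      nhdsWithin_le_nhds).and (self_mem_nhdsWithin (s := Set.Iio (1 : ℝ)))).exists
  have hT' : IsSelfAdjoint T := .of_nonneg hT
  set t : H →L[ℂ] H := algebraMap ℝ _ (r * ‖T‖)
  have ht : IsSelfAdjoint t := .algebraMap _ (.all _)
  obtain ⟨x, hx⟩ : ∃ x, (T - t)⁺ x ≠ 0 := by
    by_contra! hzero
    exact posPart_sub_norm_ne_zero hT hT0 hr0 hr1 (ContinuousLinearMap.ext hzero)
  refine ⟨(T - t)⁺ x, hx, fun j => ?_⟩
  have hXj : SemiconjBy (X j) (T - t) (c j • T - t) :=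
    (h j).semiconjBy_left.sub_right (Algebra.commute_algebraMap_right _ _)
  have hpos := semiconjBy_posPart hXj (hT'.sub ht) (((IsSelfAdjoint.all (c j)).smul hT').sub ht)
  rw [posPart_smul_sub_norm_eq_zero hT hr0 (hcr j), SemiconjBy, zero_mul] at hpos
  exact congr($hpos x)

lemma apply_eq_zero_of_nonneg_of_inner_eq_zero {T : H →L[ℂ] H} (hT : 0 ≤ T) {v : H}
    (hv : inner ℂ v (T v) = 0) : T v = 0 := by
  obtain ⟨S, rfl⟩ := CStarAlgebra.nonneg_iff_eq_star_mul_self.mp hT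
  rw [mul_apply_eq_comp, star_eq_adjoint, adjoint_inner_right, inner_self_eq_zero] at hv
  rw [mul_apply_eq_comp, hv, map_zero]

namespace IsIrreducibleFamily

variable {n : ℕ} {Y : Fin (n + 1) → H →L[ℂ] H}

lemma injective_or_eq_zero (hirr : IsIrreducibleFamily Y) {T : H →L[ℂ] H} (hT : IsSelfAdjoint T)
    (h : ∀ i, ∃ c : ℝ, c ≠ 0 ∧ QCommute c T (Y i)) : Function.Injective T ∨ T = 0 := by
  have hker : ∀ {X : H →L[ℂ] H} {c : ℝ}, QCommute c T X → ∀ v ∈ T.ker, X v ∈ T.ker := by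
    intro X c hX v hv
    have hTv : T v = 0 := hv
    calc T (X v) = c • X (T v) := congr($hX v)
      _ = 0 := by rw [hTv, map_zero, smul_zero]
  refine (hirr T.ker T.isClosed_ker fun i v hv => ?_).imp LinearMap.ker_eq_bot.mp fun htop => ?_
  · obtain ⟨c, hc, hTY⟩ := h i
    have hstar : QCommute c⁻¹ T (star (Y i)) := by
      simpa only [hT.star_eq] using hTY.star_star.symm hc
    exact ⟨hker hTY v hv, hker hstar v hv⟩
  · exact coe_injective (LinearMap.ker_eq_top.mp htop)

lemma nonneg_or_nonpos (hirr : IsIrreducibleFamily Y) {T : H →L[ℂ] H} (hT : IsSelfAdjoint T)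
    (h : ∀ i, ∃ c : ℝ, 0 < c ∧ QCommute c T (Y i)) : 0 ≤ T ∨ T ≤ 0 := by
  have hpos : IsSelfAdjoint T⁺ := .of_nonneg (CFC.posPart_nonneg T)
  have hdich : Function.Injective (T⁺ : H →L[ℂ] H) ∨ T⁺ = 0 :=
    hirr.injective_or_eq_zero hpos fun i =>
      let ⟨c, hc, hTY⟩ := h i; ⟨c, hc.ne', hTY.posPart hT hc.le⟩
  refine hdich.imp (fun hinj => ?_) (CFC.posPart_eq_zero_iff T hT).mp
  refine (CFC.negPart_eq_zero_iff T hT).mp (ContinuousLinearMap.ext fun x => hinj ?_)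
  exact Eq.trans congr($(CFC.posPart_mul_negPart T) x) (map_zero _).symm

lemma eq_zero_of_inner_eq_zero (hirr : IsIrreducibleFamily Y) {T : H →L[ℂ] H}
    (hT : IsSelfAdjoint T) (h : ∀ i, ∃ c : ℝ, 0 < c ∧ QCommute c T (Y i)) {v : H} (hv : v ≠ 0)
    (hvT : inner ℂ v (T v) = 0) : T = 0 := by
  have hTv : T v = 0 := by
    rcases hirr.nonneg_or_nonpos hT h with hpos | hneg
    · exact apply_eq_zero_of_nonneg_of_inner_eq_zero hpos hvT
    · refine neg_eq_zero.mp <| apply_eq_zero_of_nonneg_of_inner_eq_zero (neg_nonneg.mpr hneg) ?_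
      rw [neg_apply, inner_neg_right, hvT, neg_zero]
  have hdich : Function.Injective T ∨ T = 0 := hirr.injective_or_eq_zero hT fun i =>
    (h i).imp fun _ hc => ⟨hc.1.ne', hc.2⟩
  exact hdich.resolve_left fun hinj => hv (hinj (hTv.trans (map_zero T).symm))

-- Rotate `Z` to `W` with `⟪v, W v⟫` real for one `v ≠ 0`. The imaginary part of `W` is then
-- semidefinite with vanishing quadratic form at `v`, hence zero.
lemma exists_eq_smul_nonneg (hirr : IsIrreducibleFamily Y) {Z : H →L[ℂ] H}
    (h : ∀ i, ∃ c : ℝ, 0 < c ∧ QCommute c Z (Y i) ∧ QCommute c (star Z) (Y i)) :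
    ∃ (lam : ℂ) (P : H →L[ℂ] H), ‖lam‖ = 1 ∧ 0 ≤ P ∧ Z = lam • P := by
  cases subsingleton_or_nontrivial H with
  | inl _ => exact ⟨1, Z, norm_one, (Subsingleton.elim 0 Z).le, (one_smul ℂ Z).symm⟩
  | inr _ =>
  obtain ⟨v, hv⟩ := exists_ne (0 : H)
  obtain ⟨c, hc, hcv⟩ := Complex.exists_norm_eq_mul_self (inner ℂ v (Z v))
  have hcc : star c * c = 1 := by
    rw [Complex.star_def, Complex.conj_mul', hc, Complex.ofReal_one, one_pow]
  set W := c • Z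
  have hW : ∀ i, ∃ d : ℝ, 0 < d ∧ QCommute d W (Y i) ∧ QCommute d (star W) (Y i) := fun i =>
    let ⟨d, hd, hZ, hZ'⟩ := h i
    ⟨d, hd, hZ.smul_left c, by simpa only [W, star_smul] using hZ'.smul_left (star c)⟩
  have hZW : Z = star c • W := by rw [smul_smul, hcc, one_smul]
  suffices hWself : IsSelfAdjoint W by
    refine (hirr.nonneg_or_nonpos hWself fun i => (hW i).imp fun _ hd => ⟨hd.1, hd.2.1⟩).elim
      (fun hpos => ⟨star c, W, by rwa [norm_star], hpos, hZW⟩)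
      fun hneg => ⟨-star c, -W, by rwa [norm_neg, norm_star], neg_nonneg.mpr hneg,
        by rwa [neg_smul_neg]⟩
  set A := Complex.I • (W - star W)
  have hA : IsSelfAdjoint A := by
    rw [IsSelfAdjoint, star_smul, star_sub, star_star, Complex.star_def, Complex.conj_I, neg_smul,
      ← smul_neg, neg_sub]
  have hAY : ∀ i, ∃ d : ℝ, 0 < d ∧ QCommute d A (Y i) := fun i =>
    let ⟨d, hd, hWY, hWY'⟩ := hW i; ⟨d, hd, (hWY.sub_left hWY').smul_left Complex.I⟩
  have hAv : inner ℂ v (A v) = 0 := by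
    have hWv : inner ℂ v (W v) = ‖inner ℂ v (Z v)‖ := by rw [hcv, smul_apply, inner_smul_right]
    have hWv' : inner ℂ v (star W v) = ‖inner ℂ v (Z v)‖ := by
      rw [star_eq_adjoint, adjoint_inner_right, ← inner_conj_symm, hWv, Complex.conj_ofReal]
    rw [smul_apply, sub_apply, inner_smul_right, inner_sub_right, hWv, hWv', sub_self, mul_zero]
  have hA0 : A = 0 := hirr.eq_zero_of_inner_eq_zero hA hAY hv hAv
  exact (sub_eq_zero.mp ((smul_eq_zero.mp hA0).resolve_left Complex.I_ne_zero)).symm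

lemma topologicalClosure_span_eq_top (hirr : IsIrreducibleFamily Y) {ι : Type*} {u : ι → H}
    (hu : ∃ k, u k ≠ 0) (h : ∀ i k, Y i (u k) ∈ Submodule.span ℂ (Set.range u) ∧
      star (Y i) (u k) ∈ Submodule.span ℂ (Set.range u)) :
    (Submodule.span ℂ (Set.range u)).topologicalClosure = ⊤ := by
  set S := Submodule.span ℂ (Set.range u)
  have hinv : ∀ X : H →L[ℂ] H, (∀ k, X (u k) ∈ S) →
      S.topologicalClosure ∈ Module.End.invtSubmodule (X : H →ₗ[ℂ] H) := fun X hX =>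
    Submodule.topologicalClosure_mem_invtSubmodule <| (Module.End.mem_invtSubmodule _).mpr <|
      Submodule.span_le.mpr <| Set.range_subset_iff.mpr hX
  refine (hirr _ S.isClosed_topologicalClosure fun i v hv =>
    ⟨hinv _ (fun k => (h i k).1) hv, hinv _ (fun k => (h i k).2) hv⟩).resolve_left fun hbot => ?_
  obtain ⟨k, hk⟩ := hu
  have huk : u k ∈ S.topologicalClosure :=
    S.le_topologicalClosure (Submodule.subset_span (Set.mem_range_self k))
  exact hk ((Submodule.mem_bot ℂ).mp (hbot ▸ huk))

end IsIrreducibleFamily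

end Irreducible

section OrderedMonomial

/-- The monomial `x 0 ^ k 0 * x 1 ^ k 1 * ⋯` in noncommuting elements, in increasing order of the
indices. -/
def orderedMonomial {M : Type*} [Monoid M] {n : ℕ} (x : Fin n → M) (k : Fin n → ℕ) : M :=
  (List.ofFn fun j => x j ^ k j).prod

lemma orderedMonomial_zero {M : Type*} [Monoid M] {n : ℕ} (x : Fin n → M) :
    orderedMonomial x 0 = 1 := by
  simp [orderedMonomial]

lemma orderedMonomial_succ {M : Type*} [Monoid M] {n : ℕ} (x : Fin (n + 1) → M)
    (k : Fin (n + 1) → ℕ) :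
    orderedMonomial x k = x 0 ^ k 0 * orderedMonomial (fun j => x j.succ) (fun j => k j.succ) := by
  rw [orderedMonomial, List.ofFn_succ, List.prod_cons, orderedMonomial]

variable {A : Type*} [Ring A] [Algebra ℝ A] {n : ℕ} {x : Fin n → A} {k : Fin n → ℕ}

lemma QCommute.orderedMonomial_right {T : A} {c : Fin n → ℝ} (h : ∀ j, QCommute (c j) T (x j)) :
    QCommute (∏ j, c j ^ k j) T (orderedMonomial x k) := by
  induction n with
  | zero => simpa using! of_commute (Commute.one_right T)
  | succ n ih =>
    rw [Fin.prod_univ_succ, orderedMonomial_succ]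
    exact ((h 0).pow_right _).mul_right (ih fun j => h j.succ)

lemma mul_orderedMonomial {a : Fin n → ℝ}
    (h : ∀ ⦃m i⦄, m < i → QCommute (a m) (x i) (x m)) (i : Fin n) :
    x i * orderedMonomial x k =
      (∏ m with m < i, a m ^ k m) • orderedMonomial x (k + Pi.single i 1) := by
  induction n with
  | zero => exact i.elim0
  | succ n ih =>
    rw [orderedMonomial_succ, orderedMonomial_succ x (k + _), Finset.prod_filter,
      Fin.prod_univ_succ]
    cases i using Fin.cases with
    | zero => simp [← mul_assoc, pow_succ']
    | succ i =>
      have htail : (fun j : Fin n => (k + Pi.single i.succ 1 : Fin (n + 1) → ℕ) j.succ) =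
          (fun j => k j.succ) + Pi.single i 1 := by
        ext j; simp [Pi.single_apply]
      have hih := ih (k := fun j => k j.succ) (fun m l hml => h (Fin.succ_lt_succ_iff.mpr hml)) i
      rw [← mul_assoc, (h i.succ_pos).pow_right (k 0), smul_mul_assoc, mul_assoc, hih, htail,
        mul_smul_comm, smul_smul, Finset.prod_filter]
      simp

end OrderedMonomial

section WeightProd

variable {n : ℕ} {a : Fin n → ℝ}

/-- The product of the weights `a j ^ k j` over the indices `j` below `i`: the eigenvalue, at the
multi-index `k`, of the square root of `tailSum Y i`. -/
def weightProd (a : Fin n → ℝ) (k : Fin n → ℕ) (i : Fin (n + 1)) : ℝ :=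
  ∏ j with j.castSucc < i, a j ^ k j

lemma weightProd_castSucc (k : Fin n → ℕ) (j : Fin n) :
    weightProd a k j.castSucc = ∏ m with m < j, a m ^ k m := by
  simp only [weightProd, Fin.castSucc_lt_castSucc_iff]

lemma weightProd_succ (k : Fin n → ℕ) (j : Fin n) :
    weightProd a k j.succ = weightProd a k j.castSucc * a j ^ k j := by
  have hfilter : Finset.univ.filter (fun m : Fin n => m.castSucc < j.succ) =
      insert j (Finset.univ.filter fun m : Fin n => m.castSucc < j.castSucc) := by
    ext m
    simp [Fin.castSucc_lt_succ_iff, le_iff_eq_or_lt]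
  rw [weightProd, hfilter, Finset.prod_insert (by simp), mul_comm, weightProd]

lemma weightProd_last (k : Fin n → ℕ) : weightProd a k (Fin.last n) = ∏ j, a j ^ k j := by
  simp only [weightProd, Fin.castSucc_lt_last, Finset.filter_true]

lemma weightProd_pos (ha : ∀ j, 0 < a j) (k : Fin n → ℕ) (i : Fin (n + 1)) :
    0 < weightProd a k i :=
  Finset.prod_pos fun j _ => pow_pos (ha j) _

lemma weightProd_castSucc_add_single (k : Fin n → ℕ) (j : Fin n) (m : ℕ) :
    weightProd a (k + Pi.single j m) j.castSucc = weightProd a k j.castSucc := by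
  refine Finset.prod_congr rfl fun l hl => ?_
  have hlj : l ≠ j := by rintro rfl; simp at hl
  simp [hlj]

lemma weightProd_injective (ha0 : ∀ j, 0 < a j) (ha1 : ∀ j, a j ≠ 1) :
    Function.Injective (weightProd a) := by
  intro k l hkl
  ext j
  have hj : weightProd a l j.castSucc * a j ^ k j = weightProd a l j.castSucc * a j ^ l j := by
    rw [← weightProd_succ, ← hkl, ← weightProd_succ, hkl]
  exact pow_right_injective₀ (ha0 j) (ha1 j)
    (mul_left_cancel₀ (weightProd_pos ha0 l j.castSucc).ne' hj)

end WeightProd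

section StarAlgebra

variable {A : Type*} [Ring A] [StarRing A] {n : ℕ}

/-- The partial sum `Y_i* Y_i + ⋯ + Y_{n+1}* Y_{n+1}` of the sphere relation (R5). -/
def tailSum (Y : Fin (n + 1) → A) (i : Fin (n + 1)) : A :=
  ∑ k ∈ Finset.Ici i, star (Y k) * Y k

lemma tailSum_last (Y : Fin (n + 1) → A) :
    tailSum Y (Fin.last n) = star (Y (Fin.last n)) * Y (Fin.last n) := by
  rw [tailSum, ← Fin.top_eq_last, Finset.Ici_top, Finset.sum_singleton]

lemma tailSum_castSucc (Y : Fin (n + 1) → A) (j : Fin n) :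
    tailSum Y j.castSucc = star (Y j.castSucc) * Y j.castSucc + tailSum Y j.succ := by
  have hIci : Finset.Ici j.castSucc = insert j.castSucc (Finset.Ici j.succ) := by
    ext m
    rw [Finset.mem_insert, Finset.mem_Ici, Finset.mem_Ici, ← Fin.castSucc_lt_iff_succ_le,
      le_iff_eq_or_lt, eq_comm]
  rw [tailSum, hIci, Finset.sum_insert (by simp), tailSum]

lemma star_mul_self_eq_sub (Y : Fin (n + 1) → A) (j : Fin n) :
    star (Y j.castSucc) * Y j.castSucc = tailSum Y j.castSucc - tailSum Y j.succ :=
  (sub_eq_of_eq_add (tailSum_castSucc Y j)).symm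

lemma tailSum_add_sum_Iio (Y : Fin (n + 1) → A) (i : Fin (n + 1)) :
    tailSum Y i + ∑ k ∈ Finset.Iio i, star (Y k) * Y k = tailSum Y 0 := by
  rw [tailSum, tailSum, ← Finset.sum_union (by simp [Finset.disjoint_left])]
  congr 1
  ext m
  simp [le_or_gt]

lemma isSelfAdjoint_tailSum (Y : Fin (n + 1) → A) (i : Fin (n + 1)) :
    IsSelfAdjoint (tailSum Y i) :=
  isSelfAdjoint_sum _ fun k _ => .star_mul_self (Y k)

variable [Algebra ℝ A]

/-- The relations (R1)-(R5) with the `j`-th generator `q`-commuting with the later ones with its own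
weight `a j`. The weights of a `Σ_q`-family are `q, …, q, q ^ 2`; relation (R3) for `i = n + 1` says
that the last generator is normal. -/
structure IsWeightedSigmaFamily (a : Fin n → ℝ) (Y : Fin (n + 1) → A) : Prop where
  qCommute : ∀ ⦃j i⦄, j.castSucc < i → QCommute (a j) (Y j.castSucc) (Y i)
  qCommute_star : ∀ ⦃j i⦄, j.castSucc < i → QCommute (a j) (Y j.castSucc) (star (Y i))
  mul_star_self : ∀ j, Y j.castSucc * star (Y j.castSucc) =
    star (Y j.castSucc) * Y j.castSucc + (1 - a j ^ 2) • tailSum Y j.succ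
  isStarNormal_last : IsStarNormal (Y (Fin.last n))
  tailSum_zero : tailSum Y 0 = 1

namespace IsWeightedSigmaFamily

variable {a : Fin n → ℝ} {Y : Fin (n + 1) → A} {i : Fin (n + 1)} {j : Fin n}

lemma qCommute_tailSum (hY : IsWeightedSigmaFamily a Y) (hji : j.castSucc < i) :
    QCommute (a j ^ 2) (Y j.castSucc) (tailSum Y i) :=
  .sum_right fun k hk => by
    have hjk := hji.trans_le (Finset.mem_Ici.mp hk)
    simpa only [sq] using (hY.qCommute_star hjk).mul_right (hY.qCommute hjk)

variable [StarModule ℝ A]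

lemma commute_tailSum (hY : IsWeightedSigmaFamily a Y) (ha : ∀ j, a j ≠ 0) (hij : i ≤ j.castSucc) :
    Commute (Y j.castSucc) (tailSum Y i) := by
  have hsum : Commute (Y j.castSucc) (∑ k ∈ Finset.Iio i, star (Y k) * Y k) :=
    .sum_right _ _ _ fun k hk => by
      have hkj := (Finset.mem_Iio.mp hk).trans_le hij
      obtain ⟨k, rfl⟩ := Fin.exists_castSucc_eq.mpr (Fin.ne_last_of_lt hkj)
      have hstar : QCommute (a k) (Y j.castSucc) (star (Y k.castSucc)) := by
        simpa only [star_star] using (hY.qCommute_star hkj).star_star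
      have hprod := hstar.mul_right ((hY.qCommute hkj).symm (ha k))
      rw [mul_inv_cancel₀ (ha k)] at hprod
      exact hprod.commute
  rw [eq_sub_of_add_eq (tailSum_add_sum_Iio Y i), hY.tailSum_zero]
  exact (Commute.one_right _).sub_right hsum

lemma tailSum_qCommute_star (hY : IsWeightedSigmaFamily a Y) (ha : ∀ j, a j ≠ 0)
    (i : Fin (n + 1)) (j : Fin n) :
    QCommute (if j.castSucc < i then a j ^ 2 else 1) (tailSum Y i) (star (Y j.castSucc)) := by
  rw [← (isSelfAdjoint_tailSum Y i).star_eq]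
  apply QCommute.star_star
  split_ifs with hji
  · exact hY.qCommute_tailSum hji
  · exact .of_commute (hY.commute_tailSum ha (not_lt.mp hji))

lemma tailSum_qCommute_orderedMonomial (hY : IsWeightedSigmaFamily a Y) (ha : ∀ j, a j ≠ 0)
    (i : Fin (n + 1)) (k : Fin n → ℕ) :
    QCommute (weightProd a k i ^ 2) (tailSum Y i)
      (orderedMonomial (fun j => star (Y j.castSucc)) k) := by
  have hprod : weightProd a k i ^ 2 = ∏ j, (if j.castSucc < i then a j ^ 2 else 1) ^ k j := by
    rw [weightProd, ← Finset.prod_pow, Finset.prod_filter]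
    refine Finset.prod_congr rfl fun j _ => ?_
    split_ifs
    · exact pow_right_comm _ _ _
    · exact (one_pow _).symm
  rw [hprod]
  exact .orderedMonomial_right (hY.tailSum_qCommute_star ha i)

end IsWeightedSigmaFamily

end StarAlgebra

lemma sub_single_one_add {ι : Type*} [DecidableEq ι] {k : ι → ℕ} {i : ι} (hi : k i ≠ 0) :
    k - Pi.single i 1 + Pi.single i 1 = k :=
  tsub_add_cancel_of_le fun j => by
    by_cases hji : j = i
    · subst hji; simpa using Nat.one_le_iff_ne_zero.mpr hi
    · simp [hji]

lemma multiIndex_induction {ι : Type*} [Finite ι] [DecidableEq ι] {P : (ι → ℕ) → Prop}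
    (zero : P 0) (add_single : ∀ k i, P k → P (k + Pi.single i 1)) (k : ι → ℕ) : P k := by
  induction k using WellFoundedLT.induction with
  | ind k ih =>
  by_cases hk : k = 0
  · exact hk ▸ zero
  · obtain ⟨i, hi⟩ := Function.ne_iff.mp hk
    rw [← sub_single_one_add hi]
    refine add_single _ i (ih _ (lt_of_le_of_ne tsub_le_self fun heq => ?_))
    have := congrFun (sub_single_one_add hi) i
    simp [heq] at this

section LadderCoeff

variable {n : ℕ} {a : Fin n → ℝ}

/-- The matrix coefficient of the `j`-th generator from the `k`-th basis vector to the
`(k - e_j)`-th one; it vanishes for `k j = 0`. -/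
def ladderCoeff (a : Fin n → ℝ) (k : Fin n → ℕ) (j : Fin n) : ℝ :=
  weightProd a k j.castSucc * √(1 - a j ^ (2 * k j))

lemma ladderCoeff_sq (ha0 : ∀ j, 0 < a j) (ha1 : ∀ j, a j < 1) (k : Fin n → ℕ) (j : Fin n) :
    ladderCoeff a k j ^ 2 = weightProd a k j.castSucc ^ 2 - weightProd a k j.succ ^ 2 := by
  rw [ladderCoeff, mul_pow, Real.sq_sqrt (sub_nonneg.mpr (pow_le_one₀ (ha0 j).le (ha1 j).le)),
    weightProd_succ]
  ring

lemma ladderCoeff_nonneg (ha0 : ∀ j, 0 < a j) (k : Fin n → ℕ) (j : Fin n) :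
    0 ≤ ladderCoeff a k j :=
  mul_nonneg (weightProd_pos ha0 k _).le (Real.sqrt_nonneg _)

lemma ladderCoeff_of_eq_zero {k : Fin n → ℕ} {j : Fin n} (hkj : k j = 0) :
    ladderCoeff a k j = 0 := by
  simp [ladderCoeff, hkj]

lemma ladderCoeff_add_single_pos (ha0 : ∀ j, 0 < a j) (ha1 : ∀ j, a j < 1) (k : Fin n → ℕ)
    (j : Fin n) : 0 < ladderCoeff a (k + Pi.single j 1) j := by
  refine mul_pos (weightProd_pos ha0 _ _) (Real.sqrt_pos.mpr (sub_pos.mpr ?_))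
  exact pow_lt_one₀ (ha0 j).le (ha1 j) (by simp)

lemma ladderCoeff_add_single_sq (ha0 : ∀ j, 0 < a j) (ha1 : ∀ j, a j < 1) (k : Fin n → ℕ)
    (j : Fin n) : ladderCoeff a (k + Pi.single j 1) j ^ 2 =
      ladderCoeff a k j ^ 2 + (1 - a j ^ 2) * weightProd a k j.succ ^ 2 := by
  rw [ladderCoeff_sq ha0 ha1, ladderCoeff_sq ha0 ha1, weightProd_succ, weightProd_succ,
    weightProd_castSucc_add_single, Pi.add_apply, Pi.single_eq_same]
  ring

end LadderCoeff

section Operators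

variable {H : Type*} [NormedAddCommGroup H] [InnerProductSpace ℂ H] {T : H →L[ℂ] H} {x y : H}
  {r s c : ℝ}

lemma apply_normalize_eq_smul (hx : x ≠ 0) (hr : 0 ≤ r) (hTx : T x = r • y)
    (hc : ‖T x‖ = c * ‖x‖) :
    T (NormedSpace.normalize x) = c • NormedSpace.normalize y := by
  have hry : r * ‖y‖ = c * ‖x‖ := by rw [← hc, hTx, norm_smul, Real.norm_of_nonneg hr]
  calc T (NormedSpace.normalize x) = ‖x‖⁻¹ • r • y := by
        rw [NormedSpace.normalize, map_smul_of_tower, hTx]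
    _ = (‖x‖⁻¹ * (r * ‖y‖)) • NormedSpace.normalize y := by
        rw [mul_smul, mul_smul, NormedSpace.norm_smul_normalize]
    _ = c • NormedSpace.normalize y := by
        rw [hry, mul_comm c, inv_mul_cancel_left₀ (norm_ne_zero_iff.mpr hx)]

lemma apply_eq_self_of_nonneg_of_apply_apply (hT : 0 ≤ T) (hx : T (T x) = x) : T x = x := by
  have hsymm : T (T x - x) = -(T x - x) := by rw [map_sub, hx, neg_sub]
  have hinner := (nonneg_iff_isPositive T).mp hT |>.re_inner_nonneg_left (T x - x)
  rw [hsymm, inner_neg_left, map_neg, inner_self_eq_norm_sq, Left.nonneg_neg_iff] at hinner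
  exact sub_eq_zero.mp (norm_eq_zero.mp (pow_eq_zero_iff two_ne_zero |>.mp
    (hinner.antisymm (sq_nonneg _))))

variable [CompleteSpace H]

lemma inner_eq_zero_of_apply_eq_smul (hT : IsSelfAdjoint T) (hrs : r ≠ s) (hx : T x = r • x)
    (hy : T y = s • y) : inner ℂ x y = 0 := by
  have hsymm : inner ℂ (T x) y = inner ℂ x (T y) := hT.isSymmetric x y
  rw [hx, hy, inner_smul_left_eq_smul, inner_smul_right_eq_smul, ← sub_eq_zero, ← sub_smul] at hsymm
  exact (smul_eq_zero.mp hsymm).resolve_left (sub_ne_zero.mpr hrs)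

lemma norm_apply_eq_mul_norm (hc : 0 ≤ c) (h : star T (T x) = c ^ 2 • x) : ‖T x‖ = c * ‖x‖ := by
  have hsq : ‖T x‖ ^ 2 = (c * ‖x‖) ^ 2 := by
    rw [T.apply_norm_sq_eq_inner_adjoint_right x, comp_apply, ← star_eq_adjoint, h,
      inner_smul_right_eq_smul, RCLike.smul_re, inner_self_eq_norm_sq, mul_pow]
  exact (pow_left_inj₀ (norm_nonneg _) (by positivity) two_ne_zero).mp hsq

end Operators

section Fock

variable {H : Type*} [NormedAddCommGroup H] [InnerProductSpace ℂ H] [CompleteSpace H] {n : ℕ}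
  {a : Fin n → ℝ} {Y : Fin (n + 1) → H →L[ℂ] H} {v x : H} {k : Fin n → ℕ}

/-- The vector `Y_1*^{k_1} ⋯ Y_n*^{k_n} v`. It is used for a vacuum vector `v`, that is, one
annihilated by `Y_1, …, Y_n`. -/
def fockVector (Y : Fin (n + 1) → H →L[ℂ] H) (v : H) (k : Fin n → ℕ) : H :=
  orderedMonomial (fun j => star (Y j.castSucc)) k v

lemma QCommute.apply_fockVector {T : H →L[ℂ] H} {c : ℝ}
    (h : QCommute c T (orderedMonomial (fun j => star (Y j.castSucc)) k)) (hv : T v = v) :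
    T (fockVector Y v k) = c • fockVector Y v k := by
  refine Eq.trans congr($h v) ?_
  rw [smul_apply, mul_apply_eq_comp, hv, fockVector]

lemma star_apply_apply_of_tailSum (ha0 : ∀ j, 0 < a j) (ha1 : ∀ j, a j < 1)
    (hx : ∀ i, tailSum Y i x = weightProd a k i ^ 2 • x) (j : Fin n) :
    star (Y j.castSucc) (Y j.castSucc x) = ladderCoeff a k j ^ 2 • x := by
  rw [ladderCoeff_sq ha0 ha1, sub_smul, ← hx, ← hx, ← sub_apply, ← star_mul_self_eq_sub,
    mul_apply_eq_comp]

lemma tailSum_last_eq_mul_self {lam : ℂ} {P : H →L[ℂ] H} (hlam : ‖lam‖ = 1) (hP : IsSelfAdjoint P)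
    (hYP : Y (Fin.last n) = lam • P) : tailSum Y (Fin.last n) = P * P := by
  rw [tailSum_last, hYP, star_smul, hP.star_eq, smul_mul_smul_comm, Complex.star_def,
    Complex.conj_mul', hlam, Complex.ofReal_one, one_pow, one_smul]

namespace IsWeightedSigmaFamily

lemma apply_star_apply_of_tailSum (hY : IsWeightedSigmaFamily a Y) (ha0 : ∀ j, 0 < a j)
    (ha1 : ∀ j, a j < 1) (hx : ∀ i, tailSum Y i x = weightProd a k i ^ 2 • x) (j : Fin n) :
    Y j.castSucc (star (Y j.castSucc) x) = ladderCoeff a (k + Pi.single j 1) j ^ 2 • x := by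
  rw [ladderCoeff_add_single_sq ha0 ha1, add_smul, mul_smul, ← hx,
    ← star_apply_apply_of_tailSum ha0 ha1 hx]
  exact congr($(hY.mul_star_self j) x)

lemma star_apply_fockVector (hY : IsWeightedSigmaFamily a Y) (v : H) (k : Fin n → ℕ) (j : Fin n) :
    star (Y j.castSucc) (fockVector Y v k) =
      weightProd a k j.castSucc • fockVector Y v (k + Pi.single j 1) := by
  have hmul := mul_orderedMonomial (x := fun j => star (Y j.castSucc)) (k := k)
    (fun m i hmi => (hY.qCommute (Fin.castSucc_lt_castSucc_iff.mpr hmi)).star_star) j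
  rw [weightProd_castSucc]
  exact congr($hmul v)

lemma tailSum_apply_eq_self (hY : IsWeightedSigmaFamily a Y)
    (hv : ∀ j : Fin n, Y j.castSucc v = 0) (i : Fin (n + 1)) : tailSum Y i v = v := by
  induction i using Fin.induction with
  | zero => rw [hY.tailSum_zero, one_apply_eq_self]
  | succ j ih => rwa [tailSum_castSucc, add_apply, mul_apply_eq_comp, hv, map_zero, zero_add] at ih

lemma tailSum_apply_fockVector (hY : IsWeightedSigmaFamily a Y) (ha0 : ∀ j, 0 < a j)
    (hv : ∀ j : Fin n, Y j.castSucc v = 0) (k : Fin n → ℕ) (i : Fin (n + 1)) :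
    tailSum Y i (fockVector Y v k) = weightProd a k i ^ 2 • fockVector Y v k :=
  (hY.tailSum_qCommute_orderedMonomial (fun j => (ha0 j).ne') i k).apply_fockVector
    (hY.tailSum_apply_eq_self hv i)

lemma fockVector_ne_zero (hY : IsWeightedSigmaFamily a Y) (ha0 : ∀ j, 0 < a j)
    (ha1 : ∀ j, a j < 1) (hv : ∀ j : Fin n, Y j.castSucc v = 0) (hv0 : v ≠ 0) (k : Fin n → ℕ) :
    fockVector Y v k ≠ 0 := by
  induction k using multiIndex_induction with
  | zero => rwa [fockVector, orderedMonomial_zero, one_apply_eq_self]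
  | add_single k j ih =>
    intro hzero
    have hYY := hY.apply_star_apply_of_tailSum ha0 ha1 (hY.tailSum_apply_fockVector ha0 hv k) j
    rw [hY.star_apply_fockVector, hzero, smul_zero, map_zero] at hYY
    exact smul_ne_zero (pow_pos (ladderCoeff_add_single_pos ha0 ha1 k j) 2).ne' ih hYY.symm

lemma star_apply_normalize_fockVector (hY : IsWeightedSigmaFamily a Y) (ha0 : ∀ j, 0 < a j)
    (ha1 : ∀ j, a j < 1) (hv : ∀ j : Fin n, Y j.castSucc v = 0) (hv0 : v ≠ 0) (k : Fin n → ℕ)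
    (j : Fin n) : star (Y j.castSucc) (NormedSpace.normalize (fockVector Y v k)) =
      ladderCoeff a (k + Pi.single j 1) j •
        NormedSpace.normalize (fockVector Y v (k + Pi.single j 1)) := by
  refine apply_normalize_eq_smul (hY.fockVector_ne_zero ha0 ha1 hv hv0 k)
    (weightProd_pos ha0 k j.castSucc).le (hY.star_apply_fockVector v k j)
    (norm_apply_eq_mul_norm (ladderCoeff_nonneg ha0 _ j) ?_)
  rw [star_star]
  exact hY.apply_star_apply_of_tailSum ha0 ha1 (hY.tailSum_apply_fockVector ha0 hv k) j

lemma tailSum_apply_normalize_fockVector (hY : IsWeightedSigmaFamily a Y) (ha0 : ∀ j, 0 < a j)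
    (hv : ∀ j : Fin n, Y j.castSucc v = 0) (k : Fin n → ℕ) (i : Fin (n + 1)) :
    tailSum Y i (NormedSpace.normalize (fockVector Y v k)) =
      weightProd a k i ^ 2 • NormedSpace.normalize (fockVector Y v k) := by
  rw [NormedSpace.normalize, map_smul_of_tower, hY.tailSum_apply_fockVector ha0 hv, smul_comm]

lemma apply_normalize_fockVector (hY : IsWeightedSigmaFamily a Y) (ha0 : ∀ j, 0 < a j)
    (ha1 : ∀ j, a j < 1) (hv : ∀ j : Fin n, Y j.castSucc v = 0) (hv0 : v ≠ 0) (k : Fin n → ℕ)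
    (j : Fin n) : Y j.castSucc (NormedSpace.normalize (fockVector Y v k)) =
      ladderCoeff a k j • NormedSpace.normalize (fockVector Y v (k - Pi.single j 1)) := by
  have htail := hY.tailSum_apply_normalize_fockVector ha0 hv
  by_cases hkj : k j = 0
  · have hnorm := norm_apply_eq_mul_norm (ladderCoeff_nonneg ha0 k j)
      (star_apply_apply_of_tailSum ha0 ha1 (htail k) j)
    rw [ladderCoeff_of_eq_zero hkj, zero_mul, norm_eq_zero] at hnorm
    rw [hnorm, ladderCoeff_of_eq_zero hkj, zero_smul]
  · obtain ⟨l, rfl⟩ : ∃ l, k = l + Pi.single j 1 :=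
      ⟨k - Pi.single j 1, (sub_single_one_add hkj).symm⟩
    have hYY := hY.apply_star_apply_of_tailSum ha0 ha1 (htail l) j
    rw [hY.star_apply_normalize_fockVector ha0 ha1 hv hv0, map_smul_of_tower, sq, mul_smul] at hYY
    rw [add_tsub_cancel_right]
    exact smul_right_injective H (ladderCoeff_add_single_pos ha0 ha1 l j).ne' hYY

lemma orthonormal_normalize_fockVector (hY : IsWeightedSigmaFamily a Y) (ha0 : ∀ j, 0 < a j)
    (ha1 : ∀ j, a j < 1) (hv : ∀ j : Fin n, Y j.castSucc v = 0) (hv0 : v ≠ 0) :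
    Orthonormal ℂ fun k => NormedSpace.normalize (fockVector Y v k) := by
  refine ⟨fun k => NormedSpace.norm_normalize_eq_one_iff.mpr
    (hY.fockVector_ne_zero ha0 ha1 hv hv0 k), fun k l hkl => ?_⟩
  obtain ⟨i, hi⟩ := Function.ne_iff.mp ((weightProd_injective ha0 fun j => (ha1 j).ne).ne hkl)
  have hsq : weightProd a k i ^ 2 ≠ weightProd a l i ^ 2 := by
    rwa [Ne, pow_left_inj₀ (weightProd_pos ha0 k i).le (weightProd_pos ha0 l i).le two_ne_zero]
  exact inner_eq_zero_of_apply_eq_smul (isSelfAdjoint_tailSum Y i) hsq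
    (hY.tailSum_apply_normalize_fockVector ha0 hv k i)
    (hY.tailSum_apply_normalize_fockVector ha0 hv l i)

lemma exists_last_eq_smul_nonneg (hY : IsWeightedSigmaFamily a Y) (ha0 : ∀ j, 0 < a j)
    (hirr : IsIrreducibleFamily Y) : ∃ (lam : ℂ) (P : H →L[ℂ] H), ‖lam‖ = 1 ∧ 0 ≤ P ∧
      Y (Fin.last n) = lam • P ∧ ∀ j : Fin n, QCommute (a j) P (star (Y j.castSucc)) := by
  obtain ⟨lam, P, hlam, hP, hYP⟩ := hirr.exists_eq_smul_nonneg (Z := Y (Fin.last n)) fun i => by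
    cases i using Fin.lastCases with
    | last => exact ⟨1, one_pos, .of_commute (.refl _), .of_commute hY.isStarNormal_last.1⟩
    | cast j =>
      exact ⟨(a j)⁻¹, inv_pos.mpr (ha0 j), (hY.qCommute j.castSucc_lt_last).symm (ha0 j).ne',
        (hY.qCommute_star j.castSucc_lt_last).symm (ha0 j).ne'⟩
  refine ⟨lam, P, hlam, hP, hYP, fun j => ?_⟩
  have hstar : QCommute (a j) (star (star (Y (Fin.last n)))) (star (Y j.castSucc)) :=
    (hY.qCommute_star j.castSucc_lt_last).star_star
  have hPY : P = lam⁻¹ • Y (Fin.last n) := by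
    rw [hYP, inv_smul_smul₀ (norm_ne_zero_iff.mp (hlam ▸ one_ne_zero))]
  rw [star_star] at hstar
  exact hPY ▸ hstar.smul_left lam⁻¹

lemma apply_normalize_fockVector_of_nonneg (hY : IsWeightedSigmaFamily a Y)
    (hv : ∀ j : Fin n, Y j.castSucc v = 0) {P : H →L[ℂ] H} (hP : 0 ≤ P)
    (hPP : tailSum Y (Fin.last n) = P * P)
    (hPY : ∀ j : Fin n, QCommute (a j) P (star (Y j.castSucc))) (k : Fin n → ℕ) :
    P (NormedSpace.normalize (fockVector Y v k)) =
      weightProd a k (Fin.last n) • NormedSpace.normalize (fockVector Y v k) := by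
  have hPv : P v = v := apply_eq_self_of_nonneg_of_apply_apply hP <| by
    rw [← mul_apply_eq_comp, ← hPP, hY.tailSum_apply_eq_self hv]
  rw [NormedSpace.normalize, map_smul_of_tower,
    (QCommute.orderedMonomial_right hPY).apply_fockVector hPv, weightProd_last, smul_comm]

theorem exists_hilbertBasis (hY : IsWeightedSigmaFamily a Y) (ha0 : ∀ j, 0 < a j)
    (ha1 : ∀ j, a j < 1) (hirr : IsIrreducibleFamily Y) (hne : Y (Fin.last n) ≠ 0) :
    ∃ lam : ℂ, ‖lam‖ = 1 ∧ ∃ b : HilbertBasis (Fin n → ℕ) ℂ H,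
      (∀ j k, Y j.castSucc (b k) = ladderCoeff a k j • b (k - Pi.single j 1)) ∧
      ∀ k, Y (Fin.last n) (b k) = lam • weightProd a k (Fin.last n) • b k := by
  obtain ⟨lam, P, hlam, hP, hYP, hPY⟩ := hY.exists_last_eq_smul_nonneg ha0 hirr
  have hP' : IsSelfAdjoint P := .of_nonneg hP
  have hP0 : P ≠ 0 := by rintro rfl; exact hne (by rw [hYP, smul_zero])
  obtain ⟨v, hv0, hv⟩ : ∃ v ≠ 0, ∀ j : Fin n, Y j.castSucc v = 0 :=
    exists_ne_zero_forall_apply_eq_zero hP hP0 ha1 fun j => by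
      simpa only [star_star, hP'.star_eq] using (hPY j).star_star
  set u := fun k => NormedSpace.normalize (fockVector Y v k)
  have hu : Orthonormal ℂ u := hY.orthonormal_normalize_fockVector ha0 ha1 hv hv0
  have hlower : ∀ j k, Y j.castSucc (u k) = ladderCoeff a k j • u (k - Pi.single j 1) :=
    fun j k => hY.apply_normalize_fockVector ha0 ha1 hv hv0 k j
  have hraise : ∀ j k, star (Y j.castSucc) (u k) =
      ladderCoeff a (k + Pi.single j 1) j • u (k + Pi.single j 1) :=
    fun j k => hY.star_apply_normalize_fockVector ha0 ha1 hv hv0 k j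
  have hPu : ∀ k, P (u k) = weightProd a k (Fin.last n) • u k :=
    hY.apply_normalize_fockVector_of_nonneg hv hP (tailSum_last_eq_mul_self hlam hP' hYP) hPY
  have hmem : ∀ (c : ℂ) (r : ℝ) k, c • r • u k ∈ Submodule.span ℂ (Set.range u) := fun c r k =>
    Submodule.smul_mem _ c <| Submodule.smul_of_tower_mem _ r <|
      Submodule.subset_span (Set.mem_range_self k)
  have hspan : (Submodule.span ℂ (Set.range u)).topologicalClosure = ⊤ := by
    refine hirr.topologicalClosure_span_eq_top ⟨0, hu.ne_zero 0⟩ fun i k => ?_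
    cases i using Fin.lastCases with
    | last =>
      rw [hYP, star_smul, hP'.star_eq, smul_apply, smul_apply, hPu]
      exact ⟨hmem _ _ k, hmem _ _ k⟩
    | cast j =>
      rw [hlower, hraise]
      simpa only [one_smul] using And.intro (hmem 1 _ _) (hmem 1 _ _)
  refine ⟨lam, hlam, HilbertBasis.mk hu hspan.ge, fun j k => ?_, fun k => ?_⟩
  · rw [HilbertBasis.coe_mk, hlower]
  · rw [HilbertBasis.coe_mk, hYP, smul_apply, hPu]

end IsWeightedSigmaFamily

end Fock

section SigmaQ

variable {n : ℕ} {q : ℝ}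

/-- The weights of a `Σ_q`-family: `q ^ 2` for the last of the `n` indices, as in (R2) and (R4), and
`q` for the other ones. -/
def sigmaWeight (q : ℝ) (n : ℕ) (j : Fin n) : ℝ :=
  if (j : ℕ) + 1 = n then q ^ 2 else q

lemma sigmaWeight_pos (hq0 : 0 < q) (j : Fin n) : 0 < sigmaWeight q n j := by
  rw [sigmaWeight]; split_ifs <;> positivity

lemma sigmaWeight_lt_one (hq0 : 0 < q) (hq1 : q < 1) (j : Fin n) : sigmaWeight q n j < 1 := by
  rw [sigmaWeight]; split_ifs
  · exact pow_lt_one₀ hq0.le hq1 two_ne_zero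
  · exact hq1

lemma weightProd_sigmaWeight_castSucc (k : Fin n → ℕ) (j : Fin n) :
    weightProd (sigmaWeight q n) k j.castSucc = q ^ ∑ m ∈ Finset.Iio j, k m := by
  rw [weightProd_castSucc, Finset.filter_gt_eq_Iio, ← Finset.prod_pow_eq_pow_sum]
  refine Finset.prod_congr rfl fun m hm => ?_
  have hmj : m < j := Finset.mem_Iio.mp hm
  rw [sigmaWeight, if_neg (by omega)]

lemma weightProd_sigmaWeight_last (k : Fin n → ℕ) :
    weightProd (sigmaWeight q n) k (Fin.last n) =
      q ^ ∑ j : Fin n, if (j : ℕ) + 1 = n then 2 * k j else k j := by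
  rw [weightProd_last, ← Finset.prod_pow_eq_pow_sum]
  refine Finset.prod_congr rfl fun j _ => ?_
  rw [sigmaWeight]
  split_ifs
  · rw [pow_mul]
  · rfl

lemma sub_single_one_eq_update {ι : Type*} [DecidableEq ι] (k : ι → ℕ) (i : ι) :
    k - Pi.single i 1 = Function.update k i (k i - 1) := by
  ext j
  by_cases hji : j = i
  · subst hji; simp
  · simp [hji]

variable {H : Type*} [NormedAddCommGroup H] [InnerProductSpace ℂ H]

lemma QCommute.of_eq_inv_smul {T X : H →L[ℂ] H} {c : ℝ} (hc : c ≠ 0)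
    (h : X * T = (c : ℂ)⁻¹ • (T * X)) : QCommute c T X := by
  rw [QCommute, h, ← Complex.ofReal_inv, Complex.coe_smul, smul_inv_smul₀ hc]

variable [CompleteSpace H] {Y : Fin (n + 1) → H →L[ℂ] H}

lemma IsSigmaQFamily.qCommute (hY : IsSigmaQFamily q Y) (hq0 : 0 < q) {j : Fin n}
    {i : Fin (n + 1)} (hji : j.castSucc < i) :
    QCommute (sigmaWeight q n j) (Y j.castSucc) (Y i) ∧
      QCommute (sigmaWeight q n j) (Y j.castSucc) (star (Y i)) := by
  have hw := (sigmaWeight_pos hq0 j).ne'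
  by_cases hjn : (j : ℕ) + 1 = n
  · obtain rfl : i = Fin.last n := Fin.ext <| by
      have hji' : (j : ℕ) < i := hji
      rw [Fin.val_last]; omega
    have hrel := hY.2.1 j.castSucc hjn
    have hwq : sigmaWeight q n j = q ^ 2 := if_pos hjn
    rw [hwq] at hw ⊢
    rw [inv_pow, ← Complex.ofReal_pow] at hrel
    exact ⟨.of_eq_inv_smul hw hrel.1, .of_eq_inv_smul hw hrel.2⟩
  · have hrel := hY.1 i j.castSucc hji fun h => hjn h.2
    have hwq : sigmaWeight q n j = q := if_neg hjn
    rw [hwq] at hw ⊢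
    exact ⟨.of_eq_inv_smul hw hrel.1, .of_eq_inv_smul hw hrel.2⟩

lemma tailSum_succ_eq_sum_Ioi (Y : Fin (n + 1) → H →L[ℂ] H) (j : Fin n) :
    tailSum Y j.succ = ∑ k ∈ Finset.Ioi j.castSucc, adjoint (Y k) * Y k := by
  rw [tailSum]
  refine Finset.sum_congr (Finset.ext fun k => ?_) fun _ _ => rfl
  rw [Finset.mem_Ici, Finset.mem_Ioi, Fin.castSucc_lt_iff_succ_le]

lemma IsSigmaQFamily.mul_star_self (hY : IsSigmaQFamily q Y) (j : Fin n) :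
    Y j.castSucc * star (Y j.castSucc) = star (Y j.castSucc) * Y j.castSucc +
      (1 - sigmaWeight q n j ^ 2) • tailSum Y j.succ := by
  rw [← sub_eq_iff_eq_add', star_eq_adjoint]
  by_cases hjn : (j : ℕ) + 1 = n
  · have hlast : j.succ = Fin.last n := Fin.ext hjn
    rw [sigmaWeight, if_pos hjn, ← pow_mul, hlast, tailSum_last, ← Complex.coe_smul]
    exact hY.2.2.2.1 j.castSucc hjn
  · rw [sigmaWeight, if_neg hjn, tailSum_succ_eq_sum_Ioi, ← Complex.coe_smul]
    exact hY.2.2.1 j.castSucc hjn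

lemma IsSigmaQFamily.isWeightedSigmaFamily (hY : IsSigmaQFamily q Y) (hq0 : 0 < q) :
    IsWeightedSigmaFamily (sigmaWeight q n) Y where
  qCommute _ _ hji := (hY.qCommute hq0 hji).1
  qCommute_star _ _ hji := (hY.qCommute hq0 hji).2
  mul_star_self := hY.mul_star_self
  isStarNormal_last := ⟨by
    have hrel := hY.2.2.1 (Fin.last n) (by simp)
    rw [← Fin.top_eq_last, Finset.Ioi_top, Finset.sum_empty, smul_zero, sub_eq_zero] at hrel
    exact hrel.symm⟩
  tailSum_zero := by
    rw [tailSum, ← bot_eq_zero, Finset.Ici_bot]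
    exact hY.2.2.2.2

end SigmaQ

lemma isPiRep_of_ladder {q : ℝ} {n : ℕ} {lam : ℂ} {Z : Fin (n + 1) → lpH n →L[ℂ] lpH n}
    (hlower : ∀ j k, Z j.castSucc (basisE k) =
      (ladderCoeff (sigmaWeight q n) k j : ℂ) • basisE (k - Pi.single j 1))
    (hlast : ∀ k, Z (Fin.last n) (basisE k) =
      (lam * weightProd (sigmaWeight q n) k (Fin.last n)) • basisE k) : IsPiRep q lam Z := by
  refine ⟨fun j hj k => ?_, fun j hj k => ?_, fun k => ?_⟩
  · rw [hlower, ladderCoeff, weightProd_sigmaWeight_castSucc, sigmaWeight, if_neg hj.ne,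
      sub_single_one_eq_update]
  · have hpow : (q ^ 2) ^ (2 * k j) = q ^ (4 * k j) := by ring
    rw [hlower, ladderCoeff, weightProd_sigmaWeight_castSucc, sigmaWeight, if_pos hj, hpow,
      sub_single_one_eq_update]
  · rw [hlast, weightProd_sigmaWeight_last, Complex.ofReal_pow]

/-- Proposition 3 of the paper: every irreducible `Σ_q`-family with `Y_{n+1} ≠ 0`
is unitarily equivalent to some `π_λ` with `|λ| = 1`. -/
theorem irreducible_family_unitarily_equivalent
    (q : ℝ) (hq0 : 0 < q) (hq1 : q < 1) (n : ℕ) (hn : 1 ≤ n)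
    {H : Type*} [NormedAddCommGroup H] [InnerProductSpace ℂ H] [CompleteSpace H]
    (Y : Fin (n + 1) → H →L[ℂ] H) (hY : IsSigmaQFamily q Y)
    (hirr : IsIrreducibleFamily Y) (hne : Y (Fin.last n) ≠ 0) :
    ∃ (lam : ℂ), ‖lam‖ = 1 ∧
      ∃ (Z : Fin (n + 1) → lpH n →L[ℂ] lpH n) (U : H ≃ₗᵢ[ℂ] lpH n),
        IsPiRep q lam Z ∧ ∀ (i : Fin (n + 1)) (x : H), U (Y i x) = Z i (U x) := by
  obtain ⟨lam, hlam, b, hlower, hlast⟩ := (hY.isWeightedSigmaFamily hq0).exists_hilbertBasis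
    (sigmaWeight_pos hq0) (sigmaWeight_lt_one hq0 hq1) hirr hne
  let Z i := b.repr.toContinuousLinearEquiv.conjContinuousAlgEquiv (Y i)
  have hZ : ∀ i x, b.repr (Y i x) = Z i (b.repr x) := fun i x => by
    simp [Z, ContinuousLinearEquiv.conjContinuousAlgEquiv_apply_apply]
  have hb : ∀ k, b.repr (b k) = basisE k := b.repr_self
  refine ⟨lam, hlam, Z, b.repr, isPiRep_of_ladder (fun j k => ?_) fun k => ?_, hZ⟩
  · rw [← hb, ← hZ, hlower, ← Complex.coe_smul, map_smul, hb]
  · rw [← hb, ← hZ, hlast, ← Complex.coe_smul, smul_smul, map_smul]
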